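/- (Submatrix Partial Permutation MMT) With block matrix [[B,U],[V,A]] (B n'×n', A n×n), n'-vectors θ', φ' and n-vectors θ, φ: Σ_r (1/r!) pperm_{β,θ̂,φ̂} [[B, U(n^r)],[V(n^r), A(n^r,n^r)]] = exp(θ(I-A)^{-1}φ^T) · pperm_{β, θ̃, φ̃}(B̃) / det(I-A)^β, where B̃ = B + U(I-A)^{-1}V, θ̃ = θ' + θ(I-A)^{-1}V, φ̃^T = φ'^T + U(I-A)^{-1}φ^T, and θ̂, φ̂ are the concatenated vectors (θ', θ repeated according to r), (φ', φ repeated according to r). -/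

import Mathlib

open scoped Classical
open Matrix

noncomputable section

/-- A partial permutation (injective partial map) of `α`: a domain together with
an injection of the domain into `α`. -/
abbrev PPerm (α : Type*) [Fintype α] [DecidableEq α] :=
  (D : Finset α) × ({x // x ∈ D} ↪ α)

variable {α : Type*} [Fintype α] [DecidableEq α]

/-- The partial function determined by a partial permutation. -/
def pfun (ψ : PPerm α) : α → Option α :=
  fun x => if h : x ∈ ψ.1 then some (ψ.2 ⟨x, h⟩) else none

/-- `k`-fold iteration of a partial permutation. -/
def piter (ψ : PPerm α) (k : ℕ) (x : α) : Option α :=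
  (fun o => o.bind (pfun ψ))^[k] (some x)

/-- The image of a partial permutation. -/
def pim (ψ : PPerm α) : Finset α := Finset.univ.image fun d => ψ.2 d

/-- `x` lies on a closed cycle of the partial permutation `ψ`. -/
def isCyc (ψ : PPerm α) (x : α) : Prop :=
  ∃ k ∈ Finset.range (Fintype.card α + 1), k ≠ 0 ∧ piter ψ k x = some x

/-- The forward orbit of `x` under `ψ`. -/
def porb (ψ : PPerm α) (x : α) : Finset α :=
  Finset.univ.filter fun y => ∃ k ∈ Finset.range (Fintype.card α + 1), piter ψ k x = some y

/-- The number of cycles `C(π_ψ)` of the permutation part of `ψ`. -/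
def pCycleCount (ψ : PPerm α) : ℕ :=
  ((Finset.univ.filter fun x => isCyc ψ x).image (porb ψ)).card

/-- The `(β,θ,φ)`-extended partial permanent of a matrix. -/
def ppermB {R : Type*} [CommRing R] (β : R) (θ φ : α → R) (M : Matrix α α R) : R :=
  ∑ ψ : PPerm α, β ^ pCycleCount ψ * (∏ d : {x // x ∈ ψ.1}, M d (ψ.2 d)) *
    (∏ j ∈ Finset.univ \ pim ψ, θ j) * (∏ k ∈ Finset.univ \ ψ.1, φ k)

/-- `A(n^r, n^r)`: index `i` repeated `r i` times. -/
def repA {n : ℕ} {R : Type*} (A : Matrix (Fin n) (Fin n) R) (r : Fin n → ℕ) :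
    Matrix ((i : Fin n) × Fin (r i)) ((i : Fin n) × Fin (r i)) R :=
  fun k l => A k.1 l.1

/-- `U(n^r)`: columns of `U` repeated according to `r`. -/
def repU {n' n : ℕ} {R : Type*} (U : Matrix (Fin n') (Fin n) R) (r : Fin n → ℕ) :
    Matrix (Fin n') ((i : Fin n) × Fin (r i)) R :=
  fun i' k => U i' k.1

/-- `V(n^r)`: rows of `V` repeated according to `r`. -/
def repV {n' n : ℕ} {R : Type*} (V : Matrix (Fin n) (Fin n') R) (r : Fin n → ℕ) :
    Matrix ((i : Fin n) × Fin (r i)) (Fin n') R :=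
  fun k j' => V k.1 j'

/-!
The vectors `θ`, `φ` become the row and the column of an extra mark `p` of one matrix `N`, and the
indices of `A` are eliminated one at a time. For a single index `x` consider the flow
`N_t = N + t N_{·x} N_{x·} / (1 - t N_{xx})`, which solves `N_t' = (N_t)_{·x} (N_t)_{x·}`.
Differentiating a partial permanent of `N_t` replaces one factor `N_{ij}` at a time by
`N_{ix} N_{xj}`, so it inserts a new point labelled `x` into the partial permutations; the two
insertions that this misses, a loop and an isolated point, are the logarithmic derivatives of
`(1 - t N_{xx})^{-β}` and `exp (N_t)_{pp}`. Hence the product of these two factors with a partial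
permanent of `N_t` has as its `k`-th derivative the same product with `k` more copies of `x`, and
the MacMahon series in one index is its Taylor series at `0`, evaluated at `t = 1`.

At `t = 1` the flow is a Schur complement, so by the quotient property of Schur complements the
eliminations compose to the elimination of all of `A`. The multiple series converges absolutely
because it is dominated by the series of `|β|` and `|N|`, of which the same argument computes the
sum as long as the absolute row sums of `A` are less than `1`, a property that elimination
preserves.
-/

section PartialInjection

variable {τ τ' : Type*}

/-- A partial injection of `τ`, encoded as a partial map `τ → Option τ`. -/
def IsPartialInj (f : τ → Option τ) : Prop :=
  ∀ ⦃a b c⦄, f a = some c → f b = some c → a = b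

/-- The edge relation of the functional graph of a partial map. -/
def Step (f : τ → Option τ) (a b : τ) : Prop := f a = some b

/-- The points that can be reached from `x` along the functional graph of `f`. -/
def forwardOrbit (f : τ → Option τ) (x : τ) : Set τ :=
  {y | Relation.ReflTransGen (Step f) x y}

/-- The points lying on a closed cycle of `f`. -/
def cyclicPoints (f : τ → Option τ) : Set τ :=
  {x | Relation.TransGen (Step f) x x}

/-- The number of closed cycles of `f`, each counted as the forward orbit of its points. -/
def cycleCount (f : τ → Option τ) : ℕ :=
  (forwardOrbit f '' cyclicPoints f).ncard

/-- The points without a preimage under `f`, i.e. the starting points of its open paths. -/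
def sources [Fintype τ] (f : τ → Option τ) : Finset τ :=
  {j | ∀ a, f a ≠ some j}

lemma mem_forwardOrbit {f : τ → Option τ} {x y : τ} :
    y ∈ forwardOrbit f x ↔ Relation.ReflTransGen (Step f) x y :=
  .rfl

lemma mem_cyclicPoints {f : τ → Option τ} {x : τ} :
    x ∈ cyclicPoints f ↔ Relation.TransGen (Step f) x x :=
  .rfl

lemma mem_sources [Fintype τ] {f : τ → Option τ} {x : τ} :
    x ∈ sources f ↔ ∀ a, f a ≠ some x := by
  simp [sources]

lemma self_mem_forwardOrbit (f : τ → Option τ) (x : τ) : x ∈ forwardOrbit f x :=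
  .refl

lemma forwardOrbit_eq_forwardOrbit_iff {f : τ → Option τ} {x y : τ} :
    forwardOrbit f x = forwardOrbit f y ↔ y ∈ forwardOrbit f x ∧ x ∈ forwardOrbit f y := by
  refine ⟨fun h ↦ ⟨h ▸ self_mem_forwardOrbit f y, h ▸ self_mem_forwardOrbit f x⟩,
    fun ⟨hxy, hyx⟩ ↦ Set.ext fun z ↦ ⟨hyx.trans, hxy.trans⟩⟩

section Reindex

variable (e : τ ≃ τ') (f : τ → Option τ)

lemma arrowCongr_optionCongr_apply (a : τ) :
    e.arrowCongr e.optionCongr f (e a) = (f a).map e := by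
  simp

lemma step_arrowCongr {a b : τ} :
    Step (e.arrowCongr e.optionCongr f) (e a) (e b) ↔ Step f a b := by
  simp [Step]

lemma transGen_step_arrowCongr {a b : τ} :
    Relation.TransGen (Step (e.arrowCongr e.optionCongr f)) (e a) (e b) ↔
      Relation.TransGen (Step f) a b := by
  refine ⟨fun h ↦ ?_, .lift e (fun a b ↦ (step_arrowCongr e f).2) _ _⟩
  have hstep (u v : τ') (huv : Step (e.arrowCongr e.optionCongr f) u v) :
      Step f (e.symm u) (e.symm v) := by
    rwa [← step_arrowCongr e, e.apply_symm_apply, e.apply_symm_apply]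
  simpa [Function.onFun] using Relation.TransGen.lift e.symm hstep _ _ h

lemma isPartialInj_arrowCongr :
    IsPartialInj (e.arrowCongr e.optionCongr f) ↔ IsPartialInj f := by
  simp only [IsPartialInj, e.surjective.forall, arrowCongr_optionCongr_apply,
    Option.map_eq_some_iff, e.injective.eq_iff, exists_eq_right]

lemma sources_arrowCongr [Fintype τ] [Fintype τ'] :
    sources (e.arrowCongr e.optionCongr f) = (sources f).map e.toEmbedding := by
  ext z
  obtain ⟨y, rfl⟩ := e.surjective z
  simp [mem_sources, e.surjective.forall]

lemma cyclicPoints_arrowCongr :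
    cyclicPoints (e.arrowCongr e.optionCongr f) = e '' cyclicPoints f := by
  ext z
  obtain ⟨y, rfl⟩ := e.surjective z
  rw [mem_cyclicPoints, transGen_step_arrowCongr, e.injective.mem_set_image, mem_cyclicPoints]

lemma forwardOrbit_arrowCongr (x : τ) :
    forwardOrbit (e.arrowCongr e.optionCongr f) (e x) = e '' forwardOrbit f x := by
  ext z
  obtain ⟨y, rfl⟩ := e.surjective z
  rw [mem_forwardOrbit, e.injective.mem_set_image, mem_forwardOrbit,
    Relation.reflTransGen_iff_eq_or_transGen, Relation.reflTransGen_iff_eq_or_transGen,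
    transGen_step_arrowCongr, e.injective.eq_iff]

lemma cycleCount_arrowCongr : cycleCount (e.arrowCongr e.optionCongr f) = cycleCount f := by
  have himage : forwardOrbit (e.arrowCongr e.optionCongr f) '' (e '' cyclicPoints f) =
      (e '' ·) '' (forwardOrbit f '' cyclicPoints f) := by
    simp only [Set.image_image, forwardOrbit_arrowCongr]
  rw [cycleCount, cyclicPoints_arrowCongr, himage,
    Set.ncard_image_of_injective _ e.injective.image_injective, cycleCount]

end Reindex

section Bypass

/-- The partial map on `τ` that follows `g : Option τ → Option (Option τ)` and jumps over the
point `none`. -/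
def bypass (g : Option τ → Option (Option τ)) (y : τ) : Option τ :=
  (g (some y)).bind fun o ↦ o.elim (g none).join some

variable {g : Option τ → Option (Option τ)} {y z : τ}

lemma bypass_eq_some_iff : bypass g y = some z ↔
    ∃ w, g (some y) = some w ∧ (w = some z ∨ w = none ∧ g none = some (some z)) := by
  rcases h : g (some y) with _ | _ | w <;> simp [bypass, h, Option.join_eq_some_iff]

lemma map_some_bypass_of_ne (h : g (some y) ≠ some none) : (bypass g y).map some = g (some y) := by
  rcases hy : g (some y) with _ | _ | z
  · simp [bypass, hy]
  · exact absurd hy h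
  · simp [bypass, hy]

lemma map_some_bypass_of_eq (hg : IsPartialInj g)
    (h : g (some y) = some none) : (bypass g y).map some = g none := by
  rcases hnone : g none with _ | _ | z
  · simp [bypass, h, hnone]
  · cases hg h hnone
  · simp [bypass, h, hnone]

lemma transGen_step_bypass :
    Relation.TransGen (Step (bypass g)) y z ↔ Relation.TransGen (Step g) (some y) (some z) := by
  constructor
  · refine fun h ↦ h.lift' some (fun a b hab ↦ ?_)
    obtain ⟨w, hw, rfl | ⟨rfl, hb⟩⟩ := bypass_eq_some_iff.1 hab
    · exact .single hw
    · exact .tail (.single hw) hb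
  · suffices H : ∀ w, Relation.TransGen (Step g) (some y) w →
        ∀ z, w = some z ∨ w = none ∧ g none = some (some z) →
          Relation.TransGen (Step (bypass g)) y z from fun h ↦ H _ h z (.inl rfl)
    intro w hw
    induction hw with
    | single h => exact fun z hz ↦ .single (bypass_eq_some_iff.2 ⟨_, h, hz⟩)
    | @tail b c _ hbc ih =>
      intro z hz
      cases b with
      | some b => exact (ih b (.inl rfl)).tail (bypass_eq_some_iff.2 ⟨c, hbc, hz⟩)
      | none =>
        rcases hz with rfl | ⟨-, hz⟩
        · exact ih z (.inr ⟨rfl, hbc⟩)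
        · exact ih z (.inr ⟨rfl, hz⟩)

lemma isPartialInj_bypass (hg : IsPartialInj g) : IsPartialInj (bypass g) := by
  intro a b c ha hb
  obtain ⟨w, ha, hw⟩ := bypass_eq_some_iff.1 ha
  obtain ⟨w', hb, hw'⟩ := bypass_eq_some_iff.1 hb
  have hww' : w = w' := by
    rcases hw with rfl | ⟨rfl, hw⟩ <;> rcases hw' with rfl | ⟨rfl, hw'⟩
    · rfl
    · cases hg ha hw'
    · cases hg hb hw
    · rfl
  exact Option.some_injective _ (hg ha (hww' ▸ hb))

lemma some_mem_forwardOrbit_iff :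
    some z ∈ forwardOrbit g (some y) ↔ z ∈ forwardOrbit (bypass g) y := by
  simp [mem_forwardOrbit, Relation.reflTransGen_iff_eq_or_transGen, transGen_step_bypass]

lemma some_mem_cyclicPoints_iff : some y ∈ cyclicPoints g ↔ y ∈ cyclicPoints (bypass g) := by
  simp [mem_cyclicPoints, transGen_step_bypass]

lemma ncard_image_forwardOrbit_some (g : Option τ → Option (Option τ)) :
    ((fun y ↦ forwardOrbit g (some y)) '' cyclicPoints (bypass g)).ncard =
      cycleCount (bypass g) := by
  have horbit (y : τ) : forwardOrbit (bypass g) y = some ⁻¹' forwardOrbit g (some y) :=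
    Set.ext fun z ↦ some_mem_forwardOrbit_iff.symm
  have hinj : Set.InjOn (some ⁻¹' ·)
      ((fun y ↦ forwardOrbit g (some y)) '' cyclicPoints (bypass g)) := by
    rintro _ ⟨y, -, rfl⟩ _ ⟨z, -, rfl⟩ hyz
    simp only [← horbit] at hyz
    rwa [forwardOrbit_eq_forwardOrbit_iff, ← some_mem_forwardOrbit_iff,
      ← some_mem_forwardOrbit_iff, ← forwardOrbit_eq_forwardOrbit_iff] at hyz
  rw [← hinj.ncard_image, Set.image_image, cycleCount]
  simp only [← horbit]

lemma cycleCount_of_ne (h : g none ≠ some none) : cycleCount g = cycleCount (bypass g) := by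
  rw [← ncard_image_forwardOrbit_some, cycleCount]
  congr 1
  ext S
  simp only [Set.mem_image, Option.exists, some_mem_cyclicPoints_iff]
  refine or_iff_right_of_imp ?_
  rintro ⟨hnone, rfl⟩
  obtain ⟨_ | y, hstep, hback⟩ := Relation.TransGen.head'_iff.1 hnone
  · exact absurd hstep h
  · exact ⟨y, some_mem_cyclicPoints_iff.1 (.tail' hback hstep),
      forwardOrbit_eq_forwardOrbit_iff.2 ⟨hback, .single hstep⟩⟩

lemma forwardOrbit_none_of_loop (h : g none = some none) : forwardOrbit g none = {none} := by
  ext z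
  refine ⟨fun hz ↦ ?_, fun hz ↦ hz ▸ .refl⟩
  rw [mem_forwardOrbit] at hz
  induction hz with
  | refl => rfl
  | tail _ hstep ih =>
    subst ih
    exact (Option.some_injective _ (h.symm.trans hstep)).symm

lemma cycleCount_of_loop [Finite τ] (h : g none = some none) :
    cycleCount g = cycleCount (bypass g) + 1 := by
  have hnone : none ∈ cyclicPoints g := .single h
  have himage : forwardOrbit g '' cyclicPoints g =
      insert {none} ((fun y ↦ forwardOrbit g (some y)) '' cyclicPoints (bypass g)) := by
    ext S
    simp only [Set.mem_image, Set.mem_insert_iff, Option.exists, some_mem_cyclicPoints_iff,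
      hnone, forwardOrbit_none_of_loop h, true_and, eq_comm (a := S)]
  rw [cycleCount, himage, Set.ncard_insert_of_notMem, ncard_image_forwardOrbit_some]
  rintro ⟨y, -, hy⟩
  simpa [hy] using self_mem_forwardOrbit g (some y)

end Bypass

end PartialInjection

section PartialPermanent

variable {τ τ' σ R S : Type*} [Fintype τ] [Fintype τ']

/-- The finite set of all partial injections of `τ`. -/
def partialInjections (τ : Type*) [Fintype τ] : Finset (τ → Option τ) :=
  {f | IsPartialInj f}

lemma mem_partialInjections {f : τ → Option τ} : f ∈ partialInjections τ ↔ IsPartialInj f := by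
  simp [partialInjections]

section CommSemiring

variable [CommSemiring R] [CommSemiring S]

/-- The weight of a partial map `f` of a set of points labelled by `π`, with respect to a matrix
`N` on the labels. The mark `p` stands for the outside: a point without image contributes an entry
of the column `p`, a point without preimage an entry of the row `p`. -/
def pweight (N : Matrix σ σ R) (p : σ) (π : τ → σ) (f : τ → Option τ) : R :=
  (∏ a, N (π a) ((f a).elim p π)) * ∏ j ∈ sources f, N p (π j)

/-- The partial permanent of the matrix `N` restricted to the points labelled by `π`, where the
vectors `θ` and `φ` are the row and the column of the mark `p`. -/
def pperm (β : R) (N : Matrix σ σ R) (p : σ) (π : τ → σ) : R :=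
  ∑ f ∈ partialInjections τ, β ^ cycleCount f * pweight N p π f

/-- The matrix `M` with the row `θ` and the column `φ` added at the index `none`. -/
def bordered (θ φ : τ → R) (M : Matrix τ τ R) : Matrix (Option τ) (Option τ) R :=
  fun a b ↦ a.elim (b.elim 0 θ) fun i ↦ b.elim (φ i) (M i)

lemma pweight_comp_equiv (N : Matrix σ σ R) (p : σ) (π : τ' → σ) (e : τ ≃ τ')
    (f : τ → Option τ) :
    pweight N p (π ∘ e) f = pweight N p π (e.arrowCongr e.optionCongr f) := by
  rw [pweight, pweight, sources_arrowCongr, Finset.prod_map, ← e.prod_comp]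
  simp only [arrowCongr_optionCongr_apply, Option.elim_map, Function.comp_def,
    Equiv.coe_toEmbedding]

lemma pperm_comp_equiv (β : R) (N : Matrix σ σ R) (p : σ) (π : τ' → σ) (e : τ ≃ τ') :
    pperm β N p (π ∘ e) = pperm β N p π :=
  Finset.sum_equiv (e.arrowCongr e.optionCongr)
    (fun f ↦ by rw [mem_partialInjections, mem_partialInjections, isPartialInj_arrowCongr])
    fun f _ ↦ by rw [cycleCount_arrowCongr, pweight_comp_equiv]

lemma map_pperm (F : R →+* S) (β : R) (N : Matrix σ σ R) (p : σ) (π : τ → σ) :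
    F (pperm β N p π) = pperm (F β) (N.map F) p π := by
  simp [pperm, pweight]

end CommSemiring

lemma abs_pperm_le (β : ℝ) (N : Matrix σ σ ℝ) (p : σ) (π : τ → σ) :
    |pperm β N p π| ≤ pperm |β| (N.map abs) p π := by
  refine (Finset.abs_sum_le_sum_abs _ _).trans_eq (Finset.sum_congr rfl fun f _ ↦ ?_)
  simp only [pweight, abs_mul, abs_pow, Finset.abs_prod, Matrix.map_apply]

end PartialPermanent

section Bridge

variable {R : Type*} {ψ : PPerm α} {x y : α} {k : ℕ}

lemma piter_succ (ψ : PPerm α) (k : ℕ) (x : α) :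
    piter ψ (k + 1) x = (piter ψ k x).bind (pfun ψ) :=
  Function.iterate_succ_apply' _ _ _

lemma piter_add (ψ : PPerm α) (k l : ℕ) (x : α) :
    piter ψ (k + l) x = (piter ψ k x).bind (piter ψ l) := by
  induction l with
  | zero => exact (Option.bind_fun_some _).symm
  | succ l ih => simp only [← add_assoc, piter_succ, ih, Option.bind_assoc]

lemma exists_piter_le_card (hk : k ≠ 0) (h : piter ψ k x = some y) :
    ∃ l ∈ Finset.range (Fintype.card α + 1), l ≠ 0 ∧ piter ψ l x = some y := by
  induction k using Nat.strong_induction_on with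
  | _ k ih =>
    by_cases hcard : k < Fintype.card α + 1
    · exact ⟨k, Finset.mem_range.2 hcard, hk, h⟩
    have hdefined (i : Fin k) : ∃ z, piter ψ i x = some z := by
      rw [← Nat.add_sub_cancel' i.2.le, piter_add, Option.bind_eq_some_iff] at h
      exact h.imp fun _ hz ↦ hz.1
    choose v hv using hdefined
    obtain ⟨i, j, hij, hvij⟩ := Fintype.exists_ne_map_eq_of_card_lt v (by simp; omega)
    wlog hlt : i < j generalizing i j
    · exact this j i hij.symm hvij.symm (lt_of_le_of_ne (not_lt.1 hlt) hij.symm)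
    refine ih (i + (k - j)) (by omega) (by omega) ?_
    rw [piter_add, hv, hvij, ← hv, ← piter_add, Nat.add_sub_cancel' j.2.le, h]

lemma transGen_step_pfun_iff :
    Relation.TransGen (Step (pfun ψ)) x y ↔
      ∃ k ∈ Finset.range (Fintype.card α + 1), k ≠ 0 ∧ piter ψ k x = some y := by
  constructor
  · intro h
    suffices ∃ k, k ≠ 0 ∧ piter ψ k x = some y from
      let ⟨_, hk, hxy⟩ := this; exists_piter_le_card hk hxy
    induction h with
    | single h => exact ⟨1, one_ne_zero, h⟩
    | tail _ hstep ih =>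
      obtain ⟨k, -, hk⟩ := ih
      exact ⟨k + 1, k.succ_ne_zero, by rw [piter_succ, hk]; exact hstep⟩
  · rintro ⟨k, -, hk, h⟩
    obtain ⟨k, rfl⟩ := Nat.exists_eq_succ_of_ne_zero hk
    clear hk
    induction k generalizing y with
    | zero => exact .single h
    | succ k ih =>
      obtain ⟨z, hz, hzy⟩ := Option.bind_eq_some_iff.1 ((piter_succ ψ (k + 1) x).symm.trans h)
      exact (ih hz).tail hzy

lemma isCyc_iff_mem_cyclicPoints : isCyc ψ x ↔ x ∈ cyclicPoints (pfun ψ) :=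
  transGen_step_pfun_iff.symm

lemma coe_porb (ψ : PPerm α) (x : α) : (porb ψ x : Set α) = forwardOrbit (pfun ψ) x := by
  ext y
  rw [mem_forwardOrbit, Relation.reflTransGen_iff_eq_or_transGen, transGen_step_pfun_iff, porb,
    Finset.coe_filter_univ]
  constructor
  · rintro ⟨_ | k, hk, h⟩
    · exact .inl (Option.some_injective _ h).symm
    · exact .inr ⟨k + 1, hk, k.succ_ne_zero, h⟩
  · rintro (rfl | ⟨k, hk, -, h⟩)
    · exact ⟨0, by simp, rfl⟩
    · exact ⟨k, hk, h⟩

lemma pCycleCount_eq_cycleCount (ψ : PPerm α) : pCycleCount ψ = cycleCount (pfun ψ) := by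
  rw [pCycleCount, ← Set.ncard_coe_finset, ← Set.ncard_image_of_injective _ Finset.coe_injective,
    Finset.coe_image, Set.image_image, Finset.coe_filter_univ]
  simp only [coe_porb, isCyc_iff_mem_cyclicPoints, Set.ofPred_mem_eq, cycleCount]

lemma pfun_eq_some_iff : pfun ψ x = some y ↔ ∃ h : x ∈ ψ.1, ψ.2 ⟨x, h⟩ = y := by
  by_cases h : x ∈ ψ.1 <;> simp [pfun, h]

lemma isPartialInj_pfun (ψ : PPerm α) : IsPartialInj (pfun ψ) := by
  intro a b c ha hb
  obtain ⟨ha, rfl⟩ := pfun_eq_some_iff.1 ha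
  obtain ⟨hb, hab⟩ := pfun_eq_some_iff.1 hb
  exact (congrArg Subtype.val (ψ.2.injective hab)).symm

lemma pfun_injective : Function.Injective (pfun : PPerm α → α → Option α) := by
  rintro ⟨D, i⟩ ⟨D', i'⟩ h
  have hmem (x : α) : x ∈ D ↔ x ∈ D' := by
    have := congrArg Option.isSome (congrFun h x)
    by_cases hx : x ∈ D <;> by_cases hx' : x ∈ D' <;> simp_all [pfun]
  obtain rfl : D = D' := Finset.ext hmem
  congr 1
  ext ⟨x, hx⟩
  simpa [pfun, hx] using congrFun h x

lemma IsPartialInj.exists_pfun_eq {f : α → Option α} (hf : IsPartialInj f) :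
    ∃ ψ : PPerm α, pfun ψ = f := by
  have hdom (d : {x // x ∈ Finset.univ.filter fun x ↦ (f x).isSome}) : (f d).isSome :=
    (Finset.mem_filter.1 d.2).2
  refine ⟨⟨_, fun d ↦ (f d).get (hdom d), fun d d' h ↦ Subtype.ext ?_⟩, ?_⟩
  · exact hf (Option.some_get (hdom d)).symm ((Option.some_get (hdom d')).symm.trans
      (congrArg some h.symm))
  · funext x
    by_cases h : (f x).isSome
    · exact (dif_pos (by simp [h])).trans (Option.some_get h)
    · simp_all [pfun]

lemma sources_pfun (ψ : PPerm α) : sources (pfun ψ) = Finset.univ \ pim ψ := by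
  ext j
  simp [mem_sources, pfun_eq_some_iff, pim]

variable [CommRing R]

lemma pweight_bordered_pfun (θ φ : α → R) (M : Matrix α α R) (ψ : PPerm α) :
    pweight (bordered θ φ M) none some (pfun ψ) = (∏ d : {x // x ∈ ψ.1}, M d (ψ.2 d)) *
      (∏ j ∈ Finset.univ \ pim ψ, θ j) * ∏ k ∈ Finset.univ \ ψ.1, φ k := by
  have hdom : ∏ a ∈ ψ.1, bordered θ φ M (some a) ((pfun ψ a).elim none some) =
      ∏ d : {x // x ∈ ψ.1}, M d (ψ.2 d) := by
    rw [← Finset.prod_coe_sort]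
    exact Finset.prod_congr rfl fun d _ ↦ by simp [pfun, bordered]
  have hcompl : ∏ a ∈ Finset.univ \ ψ.1, bordered θ φ M (some a) ((pfun ψ a).elim none some) =
      ∏ k ∈ Finset.univ \ ψ.1, φ k :=
    Finset.prod_congr rfl fun k hk ↦ by simp [pfun, bordered, (Finset.mem_sdiff.1 hk).2]
  rw [pweight, ← Finset.prod_sdiff (Finset.subset_univ ψ.1), hdom, hcompl, sources_pfun,
    mul_comm (∏ k ∈ _, φ k), mul_right_comm]
  rfl

lemma ppermB_eq_pperm (β : R) (θ φ : α → R) (M : Matrix α α R) :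
    ppermB β θ φ M = pperm β (bordered θ φ M) none some := by
  refine Finset.sum_bij (fun ψ _ ↦ pfun ψ) (fun ψ _ ↦ ?_) (fun _ _ _ _ h ↦ pfun_injective h)
    (fun f hf ↦ ?_) fun ψ _ ↦ ?_
  · exact mem_partialInjections.2 (isPartialInj_pfun ψ)
  · obtain ⟨ψ, rfl⟩ := (mem_partialInjections.1 hf).exists_pfun_eq
    exact ⟨ψ, Finset.mem_univ _, rfl⟩
  · rw [pCycleCount_eq_cycleCount, pweight_bordered_pfun]
    ring

end Bridge

section Splice

variable {τ : Type*}

/-- The partial map on `Option τ` obtained from the partial map `f` on `τ` by redirecting the point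
`p` (if there is one) to the new point `none`, which is sent to `q`. -/
def splice (f : τ → Option τ) (p : Option τ) (q : Option (Option τ)) : Option τ → Option (Option τ)
  | none => q
  | some y => if p = some y then some none else (f y).map some

variable {f : τ → Option τ} {p : Option τ} {q : Option (Option τ)}

lemma splice_some_eq_some_none_iff {y : τ} : splice f p q (some y) = some none ↔ p = some y := by
  by_cases hp : p = some y <;> simp [splice, hp]

lemma splice_injective (f : τ → Option τ) : Function.Injective2 (splice f) := by
  refine fun p p' q q' h ↦ ⟨Option.ext fun y ↦ ?_, congrFun h none⟩
  rw [← splice_some_eq_some_none_iff (q := q), h, splice_some_eq_some_none_iff]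

lemma bypass_splice (h : ∀ a, p = some a → q = (f a).map some) : bypass (splice f p q) = f := by
  funext y
  by_cases hp : p = some y
  · rcases hy : f y with _ | z <;> simp [bypass, splice, hp, h y hp, hy]
  · rcases hy : f y with _ | z <;> simp [bypass, splice, hp, hy]

lemma cycleCount_splice (h : ∀ a, p = some a → q = (f a).map some) (hq : q ≠ some none) :
    cycleCount (splice f p q) = cycleCount f := by
  rw [cycleCount_of_ne (by exact hq), bypass_splice h]

lemma cycleCount_splice_loop [Finite τ] (f : τ → Option τ) :
    cycleCount (splice f none (some none)) = cycleCount f + 1 := by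
  rw [cycleCount_of_loop (by rfl), bypass_splice (by simp)]

variable [Fintype τ]

/-- The places where a new point can be spliced into the partial injection `f`: as an isolated
point, as a loop, directly after a point of `τ`, or directly before a source of `f`. -/
def slots (f : τ → Option τ) : Finset (Option τ × Option (Option τ)) :=
  {s | (∀ a, s.1 = some a → s.2 = (f a).map some) ∧
    (s.1 = none → ∀ b, s.2 = some (some b) → b ∈ sources f)}

lemma mem_slots : (p, q) ∈ slots f ↔ (∀ a, p = some a → q = (f a).map some) ∧
    (p = none → ∀ b, q = some (some b) → b ∈ sources f) := by
  simp [slots]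

lemma sum_slots {M : Type*} [AddCommMonoid M] (f : τ → Option τ)
    (F : Option τ → Option (Option τ) → M) :
    ∑ s ∈ slots f, F s.1 s.2 = F none none + F none (some none) +
      (∑ a, F (some a) ((f a).map some) + ∑ b ∈ sources f, F none (some (some b))) := by
  have hsources : ∑ b, (if b ∈ sources f then F none (some (some b)) else 0) =
      ∑ b ∈ sources f, F none (some (some b)) := by
    rw [← Finset.sum_filter, Finset.filter_univ_mem]
  have hnext (a : τ) : ∑ q, (if q = (f a).map some then F (some a) q else 0) =
      F (some a) ((f a).map some) := by
    simp
  rw [slots, Finset.sum_filter, Fintype.sum_prod_type, Fintype.sum_option,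
    Fintype.sum_option (f := fun q ↦ ite _ _ _), Fintype.sum_option (f := fun q ↦ ite _ _ _)]
  simp only [reduceCtorEq, Option.none_eq_map_iff, IsEmpty.forall_iff, implies_true,
    and_self, ↓reduceIte, Option.some_eq_map_iff, and_false, exists_false, Option.some.injEq,
    exists_eq_right, forall_eq', forall_const, true_and, hsources, and_true, hnext]
  abel

lemma isPartialInj_splice (hf : IsPartialInj f) (h : (p, q) ∈ slots f) :
    IsPartialInj (splice f p q) := by
  simp only [mem_slots, mem_sources] at h
  rcases p with _ | p <;> rintro (_ | a) (_ | b) (_ | c) <;>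
    grind [splice, IsPartialInj, Option.map_eq_some_iff]

lemma exists_splice_bypass_eq {g : Option τ → Option (Option τ)} (hg : IsPartialInj g) :
    ∃ p q, (p, q) ∈ slots (bypass g) ∧ splice (bypass g) p q = g := by
  by_cases h : ∃ a, g (some a) = some none
  · obtain ⟨a, ha⟩ := h
    refine ⟨some a, g none, mem_slots.2 ⟨?_, by simp⟩, funext ?_⟩
    · rintro _ ⟨⟩
      exact (map_some_bypass_of_eq hg ha).symm
    · rintro (_ | y)
      · rfl
      obtain rfl | hay := eq_or_ne a y
      · simp [splice, ha]
      · rw [splice, if_neg (by simpa using hay), map_some_bypass_of_ne]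
        exact fun hy ↦ hay (Option.some_injective _ (hg ha hy))
  · push Not at h
    refine ⟨none, g none, mem_slots.2 ⟨by simp, fun _ b hb ↦ mem_sources.2 fun a ha ↦ ?_⟩,
      funext ?_⟩
    · have hab : g (some a) = some (some b) := by rw [← map_some_bypass_of_ne (h a), ha]; rfl
      cases hg hab hb
    · rintro (_ | y)
      · rfl
      · rw [splice, if_neg (by simp), map_some_bypass_of_ne (h y)]

lemma sum_partialInjections_option {M : Type*} [AddCommMonoid M]
    (F : (Option τ → Option (Option τ)) → M) :
    ∑ g ∈ partialInjections (Option τ), F g =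
      ∑ f ∈ partialInjections τ, ∑ s ∈ slots f, F (splice f s.1 s.2) := by
  rw [Finset.sum_sigma']
  symm
  refine Finset.sum_bij (fun x _ ↦ splice x.1 x.2.1 x.2.2) ?_ ?_ ?_ fun _ _ ↦ rfl
  · rintro ⟨f, p, q⟩ h
    rw [Finset.mem_sigma, mem_partialInjections] at h
    exact mem_partialInjections.2 (isPartialInj_splice h.1 h.2)
  · rintro ⟨f, p, q⟩ h ⟨f', p', q'⟩ h' heq
    simp only [Finset.mem_sigma] at h h' heq
    obtain rfl : f = f' := by
      rw [← bypass_splice (mem_slots.1 h.2).1, heq, bypass_splice (mem_slots.1 h'.2).1]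
    obtain ⟨rfl, rfl⟩ := splice_injective f heq
    rfl
  · intro g hg
    rw [mem_partialInjections] at hg
    obtain ⟨p, q, hslot, hsplice⟩ := exists_splice_bypass_eq hg
    exact ⟨⟨bypass g, p, q⟩, Finset.mem_sigma.2
      ⟨mem_partialInjections.2 (isPartialInj_bypass hg), hslot⟩, hsplice⟩

end Splice

section Recursion

variable {τ σ R : Type*} [Fintype τ] [CommSemiring R]

/-- The derivative of `N ↦ pweight N p π f` at `N` in the direction `D`. -/
def pweightDeriv (N D : Matrix σ σ R) (p : σ) (π : τ → σ) (f : τ → Option τ) : R :=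
  (∑ a, (∏ c ∈ Finset.univ.erase a, N (π c) ((f c).elim p π)) * D (π a) ((f a).elim p π)) *
      ∏ j ∈ sources f, N p (π j) +
    (∏ a, N (π a) ((f a).elim p π)) *
      ∑ b ∈ sources f, (∏ j ∈ (sources f).erase b, N p (π j)) * D p (π b)

lemma prod_splice_none (N : Matrix σ σ R) (p x : σ) (π : τ → σ) (f : τ → Option τ)
    (q : Option (Option τ)) :
    ∏ a, N (a.elim x π) ((splice f none q a).elim p (·.elim x π)) =
      N x (q.elim p (·.elim x π)) * ∏ a, N (π a) ((f a).elim p π) := by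
  simp [Fintype.prod_option, splice, Option.elim_map, Function.comp_def]

lemma prod_splice_some (N : Matrix σ σ R) (p x : σ) (π : τ → σ) (f : τ → Option τ) (a : τ) :
    ∏ c, N (c.elim x π) ((splice f (some a) ((f a).map some) c).elim p (·.elim x π)) =
      N x ((f a).elim p π) *
        (N (π a) x * ∏ c ∈ Finset.univ.erase a, N (π c) ((f c).elim p π)) := by
  rw [Fintype.prod_option, ← Finset.mul_prod_erase _ _ (Finset.mem_univ a)]
  congr 1
  · simp [splice, Option.elim_map, Function.comp_def]
  · congr 1
    · simp [splice]
    · refine Finset.prod_congr rfl fun c hc ↦ ?_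
      rw [splice, if_neg (by simpa [eq_comm] using Finset.ne_of_mem_erase hc)]
      simp [Option.elim_map, Function.comp_def]

lemma sources_splice_isolated (f : τ → Option τ) :
    sources (splice f none none) = (sources f).insertNone := by
  ext (_ | y) <;> simp [mem_sources, splice, Option.forall]

lemma sources_splice_loop (f : τ → Option τ) :
    sources (splice f none (some none)) = (sources f).map .some := by
  ext (_ | y) <;> simp [mem_sources, splice, Option.forall]

lemma sources_splice_after (f : τ → Option τ) (a : τ) :
    sources (splice f (some a) ((f a).map some)) = (sources f).map .some := by
  ext (_ | y)
  · simp [mem_sources, splice, Option.forall]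
  · suffices some y ∈ sources (splice f (some a) ((f a).map some)) ↔ y ∈ sources f by simpa
    simp only [mem_sources]
    refine ⟨fun h c hc ↦ ?_, fun h o ho ↦ ?_⟩
    · obtain rfl | hca := eq_or_ne a c
      · exact h none (by simp [splice, hc])
      · exact h (some c) (by simp [splice, hc, hca])
    · obtain _ | c := o <;> grind [splice, Option.map_eq_some_iff]

lemma sources_splice_before (f : τ → Option τ) (b : τ) :
    sources (splice f none (some (some b))) = ((sources f).erase b).insertNone := by
  ext (_ | y) <;> simp [mem_sources, splice, Option.forall, eq_comm]

lemma pweight_splice_isolated (N : Matrix σ σ R) (p x : σ) (π : τ → σ) (f : τ → Option τ) :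
    pweight N p (·.elim x π) (splice f none none) = N p x * N x p * pweight N p π f := by
  rw [pweight, prod_splice_none, sources_splice_isolated, Finset.prod_insertNone, pweight]
  simp only [Option.elim_none, Option.elim_some]
  ring

lemma pweight_splice_loop (N : Matrix σ σ R) (p x : σ) (π : τ → σ) (f : τ → Option τ) :
    pweight N p (·.elim x π) (splice f none (some none)) = N x x * pweight N p π f := by
  rw [pweight, prod_splice_none, sources_splice_loop, Finset.prod_map, pweight]
  simp only [Function.Embedding.some_apply, Option.elim_none, Option.elim_some]
  ring

lemma sum_pweight_splice (N : Matrix σ σ R) (p x : σ) (π : τ → σ) (f : τ → Option τ) :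
    ∑ a, pweight N p (·.elim x π) (splice f (some a) ((f a).map some)) +
        ∑ b ∈ sources f, pweight N p (·.elim x π) (splice f none (some (some b))) =
      pweightDeriv N (.of fun i j ↦ N i x * N x j) p π f := by
  rw [pweightDeriv, Finset.sum_mul, Finset.mul_sum]
  congr 1 <;> refine Finset.sum_congr rfl fun a _ ↦ ?_
  · rw [pweight, prod_splice_some, sources_splice_after, Finset.prod_map]
    simp only [Function.Embedding.some_apply, Option.elim_some, Matrix.of_apply]
    ring
  · rw [pweight, prod_splice_none, sources_splice_before, Finset.prod_insertNone]
    simp only [Option.elim_none, Option.elim_some, Matrix.of_apply]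
    ring

lemma pperm_option (β : R) (N : Matrix σ σ R) (p x : σ) (π : τ → σ) :
    pperm β N p (fun o : Option τ ↦ o.elim x π) =
      (N p x * N x p + β * N x x) * pperm β N p π +
        ∑ f ∈ partialInjections τ, β ^ cycleCount f *
          pweightDeriv N (.of fun i j ↦ N i x * N x j) p π f := by
  rw [pperm, pperm, sum_partialInjections_option, Finset.mul_sum, ← Finset.sum_add_distrib]
  refine Finset.sum_congr rfl fun f _ ↦ ?_
  have hafter (a : τ) : cycleCount (splice f (some a) ((f a).map some)) = cycleCount f :=
    cycleCount_splice (by simp) (by cases f a <;> simp)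
  have hbefore (b : τ) : cycleCount (splice f none (some (some b))) = cycleCount f :=
    cycleCount_splice (by simp) (by simp)
  rw [sum_slots f fun p' q ↦ β ^ cycleCount (splice f p' q) * pweight N p _ (splice f p' q),
    cycleCount_splice (by simp) (by simp), cycleCount_splice_loop,
    pweight_splice_isolated, pweight_splice_loop, ← sum_pweight_splice]
  simp only [hafter, hbefore, ← Finset.mul_sum]
  ring

end Recursion

section RiccatiFlow

variable {σ 𝕜 : Type*} [Field 𝕜]

/-- The solution `N_t` of the Riccati equation `N_t' i j = N_t i x * N_t x j` with `N_0 = N`. -/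
def riccatiFlow (N : Matrix σ σ 𝕜) (x : σ) (t : 𝕜) : Matrix σ σ 𝕜 :=
  .of fun i j ↦ N i j + t * (N i x * N x j) / (1 - t * N x x)

lemma riccatiFlow_zero (N : Matrix σ σ 𝕜) (x : σ) : riccatiFlow N x 0 = N := by
  ext i j
  simp [riccatiFlow]

variable {N : Matrix σ σ 𝕜} {x : σ} {t : 𝕜}

lemma riccatiFlow_apply_self_right (h : 1 - t * N x x ≠ 0) (i : σ) :
    riccatiFlow N x t i x = N i x / (1 - t * N x x) := by
  rw [riccatiFlow, Matrix.of_apply]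
  field_simp
  ring

lemma riccatiFlow_apply_self_left (h : 1 - t * N x x ≠ 0) (j : σ) :
    riccatiFlow N x t x j = N x j / (1 - t * N x x) := by
  rw [riccatiFlow, Matrix.of_apply]
  field_simp
  ring

end RiccatiFlow

section Flow

variable {τ σ 𝕜 : Type*} [Fintype τ] [NontriviallyNormedField 𝕜]

lemma hasDerivAt_pweight {N : 𝕜 → Matrix σ σ 𝕜} {D : Matrix σ σ 𝕜} {t : 𝕜}
    (hN : ∀ i j, HasDerivAt (fun s ↦ N s i j) (D i j) t) (p : σ) (π : τ → σ) (f : τ → Option τ) :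
    HasDerivAt (fun s ↦ pweight (N s) p π f) (pweightDeriv (N t) D p π f) t := by
  simpa only [smul_eq_mul, pweight, pweightDeriv] using
    (HasDerivAt.fun_finsetProd fun a (_ : a ∈ Finset.univ) ↦ hN (π a) ((f a).elim p π)).fun_mul
      (HasDerivAt.fun_finsetProd fun b (_ : b ∈ sources f) ↦ hN p (π b))

lemma hasDerivAt_pperm_of_riccati {N : 𝕜 → Matrix σ σ 𝕜} {x : σ} {t : 𝕜}
    (hN : ∀ i j, HasDerivAt (fun s ↦ N s i j) (N t i x * N t x j) t) (β : 𝕜) (p : σ)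
    (π : τ → σ) :
    HasDerivAt (fun s ↦ pperm β (N s) p π)
      (pperm β (N t) p (fun o : Option τ ↦ o.elim x π) -
        (N t p x * N t x p + β * N t x x) * pperm β (N t) p π) t := by
  rw [pperm_option, add_sub_cancel_left]
  exact HasDerivAt.fun_sum fun f _ ↦ (hasDerivAt_pweight hN p π f).const_mul _

variable {N : Matrix σ σ 𝕜} {x : σ} {t : 𝕜}

lemma hasDerivAt_riccatiFlow (h : 1 - t * N x x ≠ 0) (i j : σ) :
    HasDerivAt (fun s ↦ riccatiFlow N x s i j)
      (riccatiFlow N x t i x * riccatiFlow N x t x j) t := by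
  have hdenom : HasDerivAt (fun s ↦ 1 - s * N x x) (-N x x) t := by
    simpa using ((hasDerivAt_id t).mul_const (N x x)).const_sub 1
  have hnum : HasDerivAt (fun s ↦ s * (N i x * N x j)) (N i x * N x j) t := by
    simpa using (hasDerivAt_id t).mul_const (N i x * N x j)
  refine ((hnum.div hdenom h).const_add (N i j)).congr_deriv ?_
  rw [riccatiFlow_apply_self_right h, riccatiFlow_apply_self_left h]
  field_simp
  ring

end Flow

section Taylor

lemma hasSum_taylor_of_hasDerivAt_succ {F : ℕ → ℂ → ℂ} {r : ℝ}
    (hF : ∀ k, ∀ t ∈ Metric.ball 0 r, HasDerivAt (F k) (F (k + 1) t) t) {z : ℂ}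
    (hz : z ∈ Metric.ball 0 r) :
    HasSum (fun k : ℕ ↦ (k.factorial : ℂ)⁻¹ * z ^ k * F k 0) (F 0 z) := by
  have hderiv (k : ℕ) : Set.EqOn (iteratedDeriv k (F 0)) (F k) (Metric.ball 0 r) := by
    induction k with
    | zero => exact fun t _ ↦ by rw [iteratedDeriv_zero]
    | succ k ih =>
      intro t ht
      rw [iteratedDeriv_succ, (ih.eventuallyEq_of_mem (Metric.isOpen_ball.mem_nhds ht)).deriv_eq,
        (hF k t ht).deriv]
  have hr : (0 : ℂ) ∈ Metric.ball 0 r := Metric.mem_ball_self (Metric.pos_of_mem_ball hz)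
  have hdiff : DifferentiableOn ℂ (F 0) (Metric.ball 0 r) := fun t ht ↦
    (hF 0 t ht).differentiableAt.differentiableWithinAt
  simpa [hderiv _ hr, mul_assoc] using Complex.hasSum_taylorSeries_on_ball hdiff hz

end Taylor

section OneIndex

variable {τ σ : Type*} [Fintype τ]

lemma pperm_sumElim_fin_succ {R : Type*} [CommSemiring R] (β : R) (N : Matrix σ σ R) (p x : σ)
    (π : τ → σ) (k : ℕ) :
    pperm β N p (Sum.elim π fun _ : Fin (k + 1) ↦ x) =
      pperm β N p (fun o : Option (τ ⊕ Fin k) ↦ o.elim x (Sum.elim π fun _ ↦ x)) := by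
  let e : Option (τ ⊕ Fin k) ≃ τ ⊕ Fin (k + 1) := (Equiv.optionEquivSumPUnit _).trans <|
    (Equiv.sumAssoc τ (Fin k) Unit).trans <|
      .sumCongr (.refl τ) <| (Equiv.optionEquivSumPUnit _).symm.trans (finSuccEquiv k).symm
  rw [← pperm_comp_equiv β N p _ e]
  congr 1
  ext (_ | _ | _) <;> rfl

lemma pperm_sumElim_fin_zero {R : Type*} [CommSemiring R] (β : R) (N : Matrix σ σ R) (p x : σ)
    (π : τ → σ) : pperm β N p (Sum.elim π fun _ : Fin 0 ↦ x) = pperm β N p π :=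
  (pperm_comp_equiv β N p _ (Equiv.sumEmpty τ (Fin 0)).symm).symm

/-- The partial permanent normalised by the exponential of the corner entry of the mark, which
collects the open paths that meet no point at all. -/
def weight (β : ℝ) (N : Matrix σ σ ℝ) (p : σ) (π : τ → σ) : ℝ :=
  Real.exp (N p p) * pperm β N p π

lemma ofReal_weight (β : ℝ) (N : Matrix σ σ ℝ) (p : σ) (π : τ → σ) :
    (weight β N p π : ℂ) =
      Complex.exp (N.map Complex.ofRealHom p p) * pperm (β : ℂ) (N.map Complex.ofRealHom) p π := by
  rw [weight, Complex.ofReal_mul, Complex.ofReal_exp]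
  exact congrArg (Complex.exp (N p p) * ·) (map_pperm Complex.ofRealHom β N p π)

lemma hasDerivAt_exp_mul_pperm {N : ℂ → Matrix σ σ ℂ} {g : ℂ → ℂ} {β t : ℂ} {x : σ}
    (hN : ∀ i j, HasDerivAt (fun s ↦ N s i j) (N t i x * N t x j) t)
    (hg : HasDerivAt g (β * N t x x * g t) t) (p : σ) (π : τ → σ) :
    HasDerivAt (fun s ↦ g s * (Complex.exp (N s p p) * pperm β (N s) p π))
      (g t * (Complex.exp (N t p p) * pperm β (N t) p (fun o : Option τ ↦ o.elim x π))) t :=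
  (hg.fun_mul ((hN p p).cexp.fun_mul (hasDerivAt_pperm_of_riccati hN β p π))).congr_deriv (by ring)

lemma hasDerivAt_exp_neg_mul_log {a t : ℂ} (β : ℂ) (h : 1 - t * a ∈ Complex.slitPlane) :
    HasDerivAt (fun s ↦ Complex.exp (-β * Complex.log (1 - s * a)))
      (β * (a / (1 - t * a)) * Complex.exp (-β * Complex.log (1 - t * a))) t := by
  have hinner : HasDerivAt (fun s ↦ 1 - s * a) (-a) t := by
    simpa using ((hasDerivAt_id t).mul_const a).const_sub 1
  exact ((hinner.clog h).const_mul (-β)).cexp.congr_deriv (by ring)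

lemma hasSum_pperm_riccatiFlow (β : ℂ) {N : Matrix σ σ ℂ} {x : σ} (hx : ‖N x x‖ < 1) (p : σ)
    (π : τ → σ) :
    HasSum (fun k : ℕ ↦ (k.factorial : ℂ)⁻¹ *
        (Complex.exp (N p p) * pperm β N p (Sum.elim π fun _ : Fin k ↦ x)))
      (Complex.exp (-β * Complex.log (1 - N x x)) * (Complex.exp (riccatiFlow N x 1 p p) *
        pperm β (riccatiFlow N x 1) p π)) := by
  obtain ⟨r, hr, hrx⟩ : ∃ r : ℝ, 1 < r ∧ r * ‖N x x‖ < 1 := by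
    refine ⟨2 / (1 + ‖N x x‖), ?_, ?_⟩
    · rw [one_lt_div (by positivity)]; linarith
    · rw [div_mul_eq_mul_div, div_lt_one (by positivity)]; linarith
  have hslit {t : ℂ} (ht : t ∈ Metric.ball 0 r) : 1 - t * N x x ∈ Complex.slitPlane := by
    refine sub_eq_add_neg 1 (t * N x x) ▸ Complex.mem_slitPlane_of_norm_lt_one ?_
    rw [norm_neg, norm_mul]
    exact (mul_le_mul_of_nonneg_right (mem_ball_zero_iff.1 ht).le (norm_nonneg _)).trans_lt hrx
  let F (k : ℕ) (t : ℂ) : ℂ := Complex.exp (-β * Complex.log (1 - t * N x x)) *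
    (Complex.exp (riccatiFlow N x t p p) *
      pperm β (riccatiFlow N x t) p (Sum.elim π fun _ : Fin k ↦ x))
  have hF (k : ℕ) (t : ℂ) (ht : t ∈ Metric.ball 0 r) : HasDerivAt (F k) (F (k + 1) t) t := by
    have hne := Complex.slitPlane_ne_zero (hslit ht)
    simp only [F, pperm_sumElim_fin_succ]
    refine hasDerivAt_exp_mul_pperm (hasDerivAt_riccatiFlow hne) ?_ p _
    rw [riccatiFlow_apply_self_left hne]
    exact hasDerivAt_exp_neg_mul_log β (hslit ht)
  have := hasSum_taylor_of_hasDerivAt_succ hF (z := 1) (by simpa using hr)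
  simpa [F, riccatiFlow_zero, pperm_sumElim_fin_zero] using this

lemma hasSum_weight_fin (β : ℝ) {N : Matrix σ σ ℝ} {x : σ} (hx : |N x x| < 1) (p : σ)
    (π : τ → σ) :
    HasSum (fun k : ℕ ↦ (k.factorial : ℝ)⁻¹ * weight β N p (Sum.elim π fun _ : Fin k ↦ x))
      (weight β (riccatiFlow N x 1) p π / (1 - N x x) ^ β) := by
  have hflow : riccatiFlow (N.map Complex.ofRealHom) x 1 =
      (riccatiFlow N x 1).map Complex.ofRealHom := by
    ext i j
    simp [riccatiFlow]
  have hpos : 0 < 1 - N x x := by linarith [le_abs_self (N x x)]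
  have hpow : (((1 - N x x) ^ β : ℝ) : ℂ)⁻¹ =
      Complex.exp (-β * Complex.log (1 - N.map Complex.ofRealHom x x)) := by
    rw [← Complex.ofReal_inv, ← Real.rpow_neg hpos.le, Real.rpow_def_of_pos hpos]
    simp [Complex.ofReal_log hpos.le, mul_comm]
  rw [← Complex.hasSum_ofReal]
  simp only [Complex.ofReal_mul, Complex.ofReal_div, Complex.ofReal_inv, Complex.ofReal_natCast,
    ofReal_weight]
  rw [div_eq_inv_mul, hpow, ← hflow]
  exact hasSum_pperm_riccatiFlow (β : ℂ) (N := N.map Complex.ofRealHom) (by simpa using hx) p π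

end OneIndex

section Elimination

variable {ι κ σ 𝕜 : Type*} [DecidableEq ι] [DecidableEq κ] [Field 𝕜]

lemma one_sub_submatrix_comp_equiv (N : Matrix σ σ 𝕜) (ρ : ι → σ) (e : κ ≃ ι) :
    1 - N.submatrix (ρ ∘ e) (ρ ∘ e) = (1 - N.submatrix ρ ρ).submatrix e e := by
  ext i j
  simp [Matrix.one_apply]

variable [Fintype ι] [Fintype κ]

/-- The matrix obtained from `N` by eliminating the labels `ρ`: it extends the Schur complement
of `1 - N.submatrix ρ ρ` to all labels. -/
def eliminate (N : Matrix σ σ 𝕜) (ρ : ι → σ) : Matrix σ σ 𝕜 :=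
  N + N.submatrix id ρ * (1 - N.submatrix ρ ρ)⁻¹ * N.submatrix ρ id

lemma eliminate_of_isEmpty [IsEmpty ι] (N : Matrix σ σ 𝕜) (ρ : ι → σ) : eliminate N ρ = N := by
  rw [eliminate, Subsingleton.elim (N.submatrix ρ id) 0, Matrix.mul_zero, add_zero]

lemma eliminate_comp_equiv (N : Matrix σ σ 𝕜) (ρ : ι → σ) (e : κ ≃ ι) :
    eliminate N (ρ ∘ e) = eliminate N ρ := by
  rw [eliminate, one_sub_submatrix_comp_equiv, Matrix.inv_submatrix_equiv,
    show N.submatrix id (ρ ∘ e) = (N.submatrix id ρ).submatrix id e from rfl,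
    show N.submatrix (ρ ∘ e) id = (N.submatrix ρ id).submatrix e id from rfl,
    Matrix.submatrix_mul_equiv, Matrix.submatrix_mul_equiv, Matrix.submatrix_id_id, eliminate]

lemma eliminate_eq_of_forall_eq {N : Matrix σ σ 𝕜} {ρ : ι → σ}
    (hdet : (1 - N.submatrix ρ ρ).det ≠ 0) {H : Matrix ι σ 𝕜}
    (hH : ∀ i j, H i j = N (ρ i) j + ∑ k, N (ρ i) (ρ k) * H k j) :
    eliminate N ρ = .of fun i j ↦ N i j + ∑ k, N i (ρ k) * H k j := by
  have hres : (1 - N.submatrix ρ ρ) * H = N.submatrix ρ id := by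
    ext i j
    rw [Matrix.sub_mul, Matrix.one_mul, Matrix.sub_apply, hH, Matrix.mul_apply]
    exact add_sub_cancel_right _ _
  rw [eliminate, Matrix.mul_assoc, ← hres,
    Matrix.nonsing_inv_mul_cancel_left _ _ (isUnit_iff_ne_zero.2 hdet)]
  rfl

lemma exists_eliminate_eq {N : Matrix σ σ 𝕜} {ρ : ι → σ} (hdet : (1 - N.submatrix ρ ρ).det ≠ 0) :
    ∃ H : Matrix ι σ 𝕜, (∀ i j, H i j = N (ρ i) j + ∑ k, N (ρ i) (ρ k) * H k j) ∧
      eliminate N ρ = .of fun i j ↦ N i j + ∑ k, N i (ρ k) * H k j := by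
  suffices hH : ∀ i j, ((1 - N.submatrix ρ ρ)⁻¹ * N.submatrix ρ id) i j = N (ρ i) j +
      ∑ k, N (ρ i) (ρ k) * ((1 - N.submatrix ρ ρ)⁻¹ * N.submatrix ρ id) k j from
    ⟨_, hH, eliminate_eq_of_forall_eq hdet hH⟩
  intro i j
  have := Matrix.mul_nonsing_inv_cancel_left (1 - N.submatrix ρ ρ) (N.submatrix ρ id)
    (isUnit_iff_ne_zero.2 hdet)
  rw [Matrix.sub_mul, Matrix.one_mul, sub_eq_iff_eq_add] at this
  exact congrFun₂ this i j

variable {N : Matrix σ σ 𝕜} {ρ : Option ι → σ}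

lemma det_option {M : Matrix (Option ι) (Option ι) 𝕜} (h : M none none ≠ 0) :
    M.det = M none none *
      (Matrix.of fun i j ↦
        M (some i) (some j) - M (some i) none * M none (some j) / M none none).det := by
  let e := Equiv.optionEquivSumPUnit.{0} ι
  let D : Matrix Unit Unit 𝕜 := .of fun _ _ ↦ M none none
  have hD : D.det = M none none := Matrix.det_unique D
  let := Matrix.invertibleOfIsUnitDet D (by rw [hD]; exact isUnit_iff_ne_zero.2 h)
  have hblocks : M.submatrix e.symm e.symm = Matrix.fromBlocks (M.submatrix some some)
      (M.submatrix some fun _ ↦ none) (M.submatrix (fun _ ↦ none) some) D := by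
    ext (i | i) (j | j) <;> rfl
  rw [← Matrix.det_submatrix_equiv_self e.symm, hblocks, Matrix.det_fromBlocks₂₂, hD]
  congr 2
  ext i j
  simp only [Matrix.sub_apply, Matrix.mul_apply, Matrix.invOf_eq_nonsing_inv,
    Matrix.inv_subsingleton, Matrix.diagonal_apply_eq, Ring.inverse_eq_inv', Matrix.of_apply,
    Matrix.submatrix_apply, Finset.univ_unique, Finset.sum_singleton, D]
  ring

lemma det_one_sub_submatrix_option (h : 1 - N (ρ none) (ρ none) ≠ 0) :
    (1 - N.submatrix ρ ρ).det = (1 - N (ρ none) (ρ none)) *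
      (1 - (riccatiFlow N (ρ none) 1).submatrix (ρ ∘ some) (ρ ∘ some)).det := by
  rw [det_option (by simpa using h)]
  congr 2
  ext i j
  simp [riccatiFlow, Matrix.one_apply, sub_sub]

-- The quotient property of Schur complements.
lemma eliminate_option (h : 1 - N (ρ none) (ρ none) ≠ 0)
    (hdet : (1 - (riccatiFlow N (ρ none) 1).submatrix (ρ ∘ some) (ρ ∘ some)).det ≠ 0) :
    eliminate N ρ = eliminate (riccatiFlow N (ρ none) 1) (ρ ∘ some) := by
  obtain ⟨H, hH, helim⟩ := exists_eliminate_eq hdet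
  let Hnone (j : σ) : 𝕜 :=
    (N (ρ none) j + ∑ k, N (ρ none) (ρ (some k)) * H k j) / (1 - N (ρ none) (ρ none))
  have hflow (i j : σ) : riccatiFlow N (ρ none) 1 i j +
      ∑ k, riccatiFlow N (ρ none) 1 i (ρ (some k)) * H k j =
        N i j + (N i (ρ none) * Hnone j + ∑ k, N i (ρ (some k)) * H k j) := by
    have hsum : ∑ k, riccatiFlow N (ρ none) 1 i (ρ (some k)) * H k j =
        ∑ k, N i (ρ (some k)) * H k j + N i (ρ none) / (1 - N (ρ none) (ρ none)) *
          ∑ k, N (ρ none) (ρ (some k)) * H k j := by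
      rw [Finset.mul_sum, ← Finset.sum_add_distrib]
      refine Finset.sum_congr rfl fun k _ ↦ ?_
      rw [riccatiFlow, Matrix.of_apply]
      ring
    rw [hsum, riccatiFlow, Matrix.of_apply]
    ring
  rw [helim, eliminate_eq_of_forall_eq (H := .of fun o j ↦ o.elim (Hnone j) (H · j))]
  · ext i j
    simpa [Fintype.sum_option] using (hflow i j).symm
  · rw [det_one_sub_submatrix_option h]
    exact mul_ne_zero h hdet
  · rintro (_ | i) j
    · have hnone : Hnone j * (1 - N (ρ none) (ρ none)) =
          N (ρ none) j + ∑ k, N (ρ none) (ρ (some k)) * H k j := div_mul_cancel₀ _ h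
      simp only [Matrix.of_apply, Option.elim_none, Option.elim_some, Fintype.sum_option]
      linear_combination hnone
    · simpa [Fintype.sum_option] using (hH i j).trans (hflow _ j)

end Elimination

section Induction

lemma fintype_induction_option.{u} {P : ∀ (ι : Type u) [Fintype ι] [DecidableEq ι], Prop}
    (of_equiv : ∀ {ι κ : Type u} [Fintype ι] [DecidableEq ι] [Fintype κ] [DecidableEq κ],
      ι ≃ κ → P ι → P κ)
    (empty : P PEmpty)
    (option : ∀ {ι : Type u} [Fintype ι] [DecidableEq ι], P ι → P (Option ι))
    (ι : Type u) (hι : Fintype ι) (hι' : DecidableEq ι) : P ι := by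
  refine Finite.induction_empty_option
    (P := fun ι ↦ ∀ (_ : Fintype ι) (_ : DecidableEq ι), P ι) ?_ ?_ ?_ ι hι hι'
  · intro ι κ e ih _ _
    have := Fintype.ofEquiv _ e.symm
    exact of_equiv e (ih this (Classical.decEq _))
  · intro _ _
    convert empty
  · intro ι _ ih _ _
    convert option (ih inferInstance (Classical.decEq _))

end Induction

section RowSums

variable {ι κ σ : Type*} [Fintype ι] [Fintype κ]

/-- All absolute row sums of the matrix `N.submatrix ρ ρ` are less than `1`, which ensures the
convergence of the MacMahon series. -/
def RowSumsLtOne (N : Matrix σ σ ℝ) (ρ : ι → σ) : Prop :=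
  ∀ i, ∑ j, |N (ρ i) (ρ j)| < 1

lemma RowSumsLtOne.comp_equiv {N : Matrix σ σ ℝ} {ρ : ι → σ} (h : RowSumsLtOne N ρ)
    (e : κ ≃ ι) : RowSumsLtOne N (ρ ∘ e) := fun i ↦
  (e.sum_comp fun j ↦ |N (ρ (e i)) (ρ j)|).trans_lt (h (e i))

lemma RowSumsLtOne.map_abs {N : Matrix σ σ ℝ} {ρ : ι → σ} (h : RowSumsLtOne N ρ) :
    RowSumsLtOne (N.map abs) ρ := by
  simpa [RowSumsLtOne] using h

variable {N : Matrix σ σ ℝ} {ρ : Option ι → σ}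

lemma RowSumsLtOne.abs_apply_none_lt (h : RowSumsLtOne N ρ) : |N (ρ none) (ρ none)| < 1 :=
  (Finset.single_le_sum (fun j _ ↦ abs_nonneg (N (ρ none) (ρ j))) (Finset.mem_univ none)).trans_lt
    (h none)

lemma RowSumsLtOne.one_sub_apply_none_pos (h : RowSumsLtOne N ρ) :
    0 < 1 - N (ρ none) (ρ none) :=
  sub_pos.2 ((le_abs_self _).trans_lt h.abs_apply_none_lt)

lemma RowSumsLtOne.riccatiFlow_none (h : RowSumsLtOne N ρ) :
    RowSumsLtOne (riccatiFlow N (ρ none) 1) (ρ ∘ some) := by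
  intro i
  have hpos := h.one_sub_apply_none_pos
  have hnone : (∑ j, |N (ρ none) (ρ (some j))|) / (1 - N (ρ none) (ρ none)) ≤ 1 := by
    have := h none
    rw [Fintype.sum_option] at this
    rw [div_le_one hpos]
    linarith [le_abs_self (N (ρ none) (ρ none))]
  calc ∑ j, |riccatiFlow N (ρ none) 1 (ρ (some i)) (ρ (some j))|
    _ ≤ ∑ j, (|N (ρ (some i)) (ρ (some j))| + |N (ρ (some i)) (ρ none)| *
          (|N (ρ none) (ρ (some j))| / (1 - N (ρ none) (ρ none)))) := by
      refine Finset.sum_le_sum fun j _ ↦ (abs_add_le _ _).trans_eq ?_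
      rw [one_mul, one_mul, abs_div, abs_mul, abs_of_pos hpos, mul_div_assoc]
    _ = ∑ j, |N (ρ (some i)) (ρ (some j))| + |N (ρ (some i)) (ρ none)| *
          ((∑ j, |N (ρ none) (ρ (some j))|) / (1 - N (ρ none) (ρ none))) := by
      rw [Finset.sum_add_distrib, ← Finset.mul_sum, Finset.sum_div]
    _ ≤ ∑ o, |N (ρ (some i)) (ρ o)| := by
      rw [Fintype.sum_option, add_comm]
      gcongr
      exact mul_le_of_le_one_right (abs_nonneg _) hnone
    _ < 1 := h (some i)

lemma RowSumsLtOne.det_one_sub_submatrix_pos {ι : Type*} [hι : Fintype ι] [hι' : DecidableEq ι]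
    {N : Matrix σ σ ℝ} {ρ : ι → σ} (h : RowSumsLtOne N ρ) : 0 < (1 - N.submatrix ρ ρ).det := by
  induction ι, hι, hι' using fintype_induction_option generalizing N with
  | of_equiv e ih =>
    have := ih (h.comp_equiv e)
    rwa [one_sub_submatrix_comp_equiv, Matrix.det_submatrix_equiv_self] at this
  | empty => simp
  | option ih =>
    rw [det_one_sub_submatrix_option h.one_sub_apply_none_pos.ne']
    exact mul_pos h.one_sub_apply_none_pos (ih h.riccatiFlow_none)

end RowSums

section Summation

lemma hasSum_prod_of_abs_le {β γ : Type*} {f F : β × γ → ℝ} {g G : β → ℝ} {s : ℝ}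
    (hf : ∀ b, HasSum (fun c ↦ f (b, c)) (g b)) (hg : HasSum g s)
    (hF : ∀ b, HasSum (fun c ↦ F (b, c)) (G b)) (hG : Summable G) (hle : ∀ x, |f x| ≤ F x) :
    HasSum f s := by
  have hsummable : Summable F := (summable_prod_of_nonneg fun x ↦ (abs_nonneg _).trans (hle x)).2
    ⟨fun b ↦ (hF b).summable, by simpa only [(hF _).tsum_eq] using hG⟩
  have hsum := (Summable.of_norm_bounded (f := f) hsummable hle).hasSum
  rwa [(hsum.prod_fiberwise hf).unique hg] at hsum

end Summation

section SeveralIndices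

variable {τ τ' σ ι κ : Type*} [Fintype τ] [Fintype τ'] [Fintype ι] [Fintype κ]

lemma weight_comp_equiv (β : ℝ) (N : Matrix σ σ ℝ) (p : σ) (π : τ' → σ) (e : τ ≃ τ') :
    weight β N p (π ∘ e) = weight β N p π :=
  congrArg _ (pperm_comp_equiv β N p π e)

lemma abs_weight_le (β : ℝ) (N : Matrix σ σ ℝ) (p : σ) (π : τ → σ) :
    |weight β N p π| ≤ weight |β| (N.map abs) p π := by
  rw [weight, abs_mul, Real.abs_exp]
  exact mul_le_mul (Real.exp_le_exp.2 (le_abs_self _)) (abs_pperm_le β N p π) (abs_nonneg _)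
    (Real.exp_nonneg _)

/-- The term of the MacMahon series in which the labels `ρ` are added to the points labelled by
`π` with the multiplicities `r`. -/
def mmtTerm (β : ℝ) (N : Matrix σ σ ℝ) (p : σ) (π : τ → σ) (ρ : ι → σ) (r : ι → ℕ) : ℝ :=
  ((∏ i, (r i).factorial : ℕ) : ℝ)⁻¹ *
    weight β N p (Sum.elim π fun k : (i : ι) × Fin (r i) ↦ ρ k.1)

lemma abs_mmtTerm_le (β : ℝ) (N : Matrix σ σ ℝ) (p : σ) (π : τ → σ) (ρ : ι → σ) (r : ι → ℕ) :
    |mmtTerm β N p π ρ r| ≤ mmtTerm |β| (N.map abs) p π ρ r := by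
  rw [mmtTerm, abs_mul, abs_of_nonneg (by positivity)]
  exact mul_le_mul_of_nonneg_left (abs_weight_le β N p _) (by positivity)

lemma mmtTerm_of_isEmpty [IsEmpty ι] (β : ℝ) (N : Matrix σ σ ℝ) (p : σ) (π : τ → σ) (ρ : ι → σ)
    (r : ι → ℕ) : mmtTerm β N p π ρ r = weight β N p π := by
  rw [mmtTerm, ← weight_comp_equiv β N p _ (Equiv.sumEmpty τ _).symm, Finset.univ_eq_empty,
    Finset.prod_empty, Nat.cast_one, inv_one, one_mul]
  rfl

lemma mmtTerm_comp_equiv (β : ℝ) (N : Matrix σ σ ℝ) (p : σ) (π : τ → σ) (ρ : ι → σ) (e : κ ≃ ι)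
    (r : ι → ℕ) : mmtTerm β N p π (ρ ∘ e) (r ∘ e) = mmtTerm β N p π ρ r := by
  rw [mmtTerm, mmtTerm, ← e.prod_comp,
    ← weight_comp_equiv β N p _ (.sumCongr (.refl τ) (Equiv.sigmaCongrLeft (β := (Fin <| r ·)) e))]
  congr 2
  ext (_ | _) <;> rfl

/-- Splits off the fibre over `none` of a family of types indexed by `Option ι`. -/
def sigmaOptionEquiv (T : Option ι → Type*) :
    (o : Option ι) × T o ≃ ((i : ι) × T (some i)) ⊕ T none where
  toFun
    | ⟨none, t⟩ => .inr t
    | ⟨some i, t⟩ => .inl ⟨i, t⟩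
  invFun := Sum.elim (fun x ↦ ⟨some x.1, x.2⟩) fun t ↦ ⟨none, t⟩
  left_inv := by rintro ⟨_ | _, _⟩ <;> rfl
  right_inv := by rintro (_ | _) <;> rfl

lemma mmtTerm_option (β : ℝ) (N : Matrix σ σ ℝ) (p : σ) (π : τ → σ) (ρ : Option ι → σ)
    (r : Option ι → ℕ) :
    mmtTerm β N p π ρ r = ((∏ i, (r (some i)).factorial : ℕ) : ℝ)⁻¹ *
      (((r none).factorial : ℝ)⁻¹ * weight β N p (Sum.elim
        (Sum.elim π fun k : (i : ι) × Fin (r (some i)) ↦ ρ (some k.1))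
        fun _ : Fin (r none) ↦ ρ none)) := by
  let e : τ ⊕ (o : Option ι) × Fin (r o) ≃ (τ ⊕ (i : ι) × Fin (r (some i))) ⊕ Fin (r none) :=
    (Equiv.sumCongr (.refl τ) (sigmaOptionEquiv _)).trans (Equiv.sumAssoc _ _ _).symm
  have hcomp : Sum.elim π (fun k : (o : Option ι) × Fin (r o) ↦ ρ k.1) =
      Sum.elim (Sum.elim π fun k : (i : ι) × Fin (r (some i)) ↦ ρ (some k.1))
        (fun _ : Fin (r none) ↦ ρ none) ∘ e := by
    ext (_ | ⟨_ | _, _⟩) <;> rfl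
  rw [mmtTerm, hcomp, weight_comp_equiv, Fintype.prod_option]
  push_cast
  ring

lemma hasSum_mmtTerm_none (β : ℝ) {N : Matrix σ σ ℝ} {ρ : Option ι → σ}
    (hρ : |N (ρ none) (ρ none)| < 1) (p : σ) (π : τ → σ) (r : ι → ℕ) :
    HasSum (fun k ↦ mmtTerm β N p π ρ (Equiv.piOptionEquivProd.symm (k, r)))
      (mmtTerm β (riccatiFlow N (ρ none) 1) p π (ρ ∘ some) r / (1 - N (ρ none) (ρ none)) ^ β) := by
  simp only [mmtTerm_option]
  rw [mmtTerm, mul_div_assoc]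
  exact (hasSum_weight_fin β hρ p _).mul_left _

theorem hasSum_mmtTerm {ι : Type*} [hι : Fintype ι] [hι' : DecidableEq ι] (β : ℝ)
    {N : Matrix σ σ ℝ} {ρ : ι → σ} (h : RowSumsLtOne N ρ) (p : σ) (π : τ → σ) :
    HasSum (mmtTerm β N p π ρ)
      (weight β (eliminate N ρ) p π / (1 - N.submatrix ρ ρ).det ^ β) := by
  induction ι, hι, hι' using fintype_induction_option generalizing β N with
  | of_equiv e ih =>
    have hsum := ih β (h.comp_equiv e)
    rw [eliminate_comp_equiv, one_sub_submatrix_comp_equiv,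
      Matrix.det_submatrix_equiv_self] at hsum
    rw [← (e.arrowCongr (.refl ℕ)).symm.hasSum_iff] at hsum
    exact hsum.congr_fun fun r ↦ (mmtTerm_comp_equiv β N p π ρ e r).symm
  | empty =>
    have hsum := hasSum_unique (mmtTerm β N p π ρ)
    rw [mmtTerm_of_isEmpty] at hsum
    rwa [eliminate_of_isEmpty, Matrix.det_isEmpty, Real.one_rpow, div_one]
  | @option ι _ _ ih =>
    have hfirst {β : ℝ} {N : Matrix σ σ ℝ} (h : RowSumsLtOne N ρ) :=
      hasSum_mmtTerm_none β h.abs_apply_none_lt p π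
    have hrest {β : ℝ} {N : Matrix σ σ ℝ} (h : RowSumsLtOne N ρ) :=
      (ih β h.riccatiFlow_none).div_const ((1 - N (ρ none) (ρ none)) ^ β)
    have hpos := h.one_sub_apply_none_pos
    have hdet := h.riccatiFlow_none.det_one_sub_submatrix_pos
    rw [det_one_sub_submatrix_option hpos.ne', eliminate_option hpos.ne' hdet.ne',
      Real.mul_rpow hpos.le hdet.le,
      mul_comm, ← div_div]
    let e : (Option ι → ℕ) ≃ (ι → ℕ) × ℕ := Equiv.piOptionEquivProd.trans (.prodComm _ _)
    rw [← e.symm.hasSum_iff]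
    exact hasSum_prod_of_abs_le (F := fun x ↦ mmtTerm |β| (N.map abs) p π ρ (e.symm x))
      (hfirst h) (hrest h) (hfirst h.map_abs) (hrest h.map_abs).summable
      fun x ↦ abs_mmtTerm_le β N p π ρ _

end SeveralIndices

section NeumannSeries

attribute [local instance] Matrix.linftyOpNormedRing Matrix.linftyOpNormedAlgebra

lemma tsum_pow_eq_inv_one_sub {ι : Type*} [Fintype ι] [DecidableEq ι] {A : Matrix ι ι ℝ}
    (hA : ∀ i, ∑ j, |A i j| < 1) : ∑' k : ℕ, A ^ k = (1 - A)⁻¹ := by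
  have hnorm : ‖A‖ < 1 := by
    rw [Matrix.linfty_opNorm_def, ← NNReal.coe_one, NNReal.coe_lt_coe,
      Finset.sup_lt_iff zero_lt_one]
    intro i _
    simpa [← NNReal.coe_lt_coe] using hA i
  have := FiniteDimensional.complete ℝ (Matrix ι ι ℝ)
  exact (Matrix.inv_eq_right_inv (mul_neg_geom_series A hnorm)).symm

end NeumannSeries

section SubmatrixMMT

lemma pperm_eq_pperm_bordered {τ σ R : Type*} [Fintype τ] [CommSemiring R] (β : R)
    (N : Matrix σ σ R) (p : σ) (π : τ → σ) :
    pperm β N p π = pperm β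
      (bordered (fun k ↦ N p (π k)) (fun k ↦ N (π k) p) (N.submatrix π π)) none some := by
  refine Finset.sum_congr rfl fun f _ ↦ ?_
  have helim (a : τ) : N (π a) ((f a).elim p π) =
      bordered (fun k ↦ N p (π k)) (fun k ↦ N (π k) p) (N.submatrix π π) (some a)
        ((f a).elim none some) := by
    cases f a <;> rfl
  simp only [pweight, helim]
  rfl

variable {τ ι : Type*} [Fintype τ] [DecidableEq τ] [Fintype ι] [DecidableEq ι]

lemma weight_eq_exp_mul_ppermB {σ : Type*} (β : ℝ) (N : Matrix σ σ ℝ) (p : σ) (π : τ → σ) :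
    weight β N p π = Real.exp (N p p) *
      ppermB β (fun k ↦ N p (π k)) (fun k ↦ N (π k) p) (N.submatrix π π) := by
  rw [weight, pperm_eq_pperm_bordered, ppermB_eq_pperm]

variable (B : Matrix τ τ ℝ) (U : Matrix τ ι ℝ) (V : Matrix ι τ ℝ) (A : Matrix ι ι ℝ)
  (θ' φ' : τ → ℝ) (θ φ : ι → ℝ)

/-- The data of the submatrix MacMahon theorem as a single matrix, with the mark `none`. -/
def borderedBlocks : Matrix (Option (τ ⊕ ι)) (Option (τ ⊕ ι)) ℝ :=
  bordered (Sum.elim θ' θ) (Sum.elim φ' φ) (Matrix.fromBlocks B U V A)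

lemma mmtTerm_borderedBlocks (β : ℝ) (r : ι → ℕ) :
    mmtTerm β (borderedBlocks B U V A θ' φ' θ φ) none (some ∘ Sum.inl) (some ∘ Sum.inr) r =
      ((∏ i, (r i).factorial : ℕ) : ℝ)⁻¹ *
        ppermB β (Sum.elim θ' fun k : (i : ι) × Fin (r i) ↦ θ k.1) (Sum.elim φ' fun k ↦ φ k.1)
          (Matrix.fromBlocks B (U.submatrix id Sigma.fst) (V.submatrix Sigma.fst id)
            (A.submatrix Sigma.fst Sigma.fst)) := by
  have hnone : borderedBlocks B U V A θ' φ' θ φ none none = 0 := rfl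
  rw [mmtTerm, weight_eq_exp_mul_ppermB, hnone, Real.exp_zero, one_mul]
  congr 2
  · ext (_ | _) <;> rfl
  · ext (_ | _) <;> rfl
  · ext (_ | _) (_ | _) <;> rfl

lemma weight_eliminate_borderedBlocks (β : ℝ) :
    weight β (eliminate (borderedBlocks B U V A θ' φ' θ φ) (some ∘ Sum.inr)) none
        (some ∘ Sum.inl : τ → Option (τ ⊕ ι)) =
      Real.exp (θ ⬝ᵥ (1 - A)⁻¹ *ᵥ φ) * ppermB β (θ' + θ ᵥ* ((1 - A)⁻¹ * V))
        (φ' + (U * (1 - A)⁻¹) *ᵥ φ) (B + U * (1 - A)⁻¹ * V) := by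
  rw [weight_eq_exp_mul_ppermB, Matrix.dotProduct_mulVec, ← Matrix.vecMul_vecMul]
  congr 2
  exact zero_add _

theorem submatrix_partial_permutation_MMT_general (β : ℝ) (hA : ∀ i, ∑ j, |A i j| < 1) :
    HasSum (fun r : ι → ℕ ↦ ((∏ i, (r i).factorial : ℕ) : ℝ)⁻¹ *
        ppermB β (Sum.elim θ' fun k : (i : ι) × Fin (r i) ↦ θ k.1) (Sum.elim φ' fun k ↦ φ k.1)
          (Matrix.fromBlocks B (U.submatrix id Sigma.fst) (V.submatrix Sigma.fst id)
            (A.submatrix Sigma.fst Sigma.fst)))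
      (Real.exp (θ ⬝ᵥ (1 - A)⁻¹ *ᵥ φ) * ppermB β (θ' + θ ᵥ* ((1 - A)⁻¹ * V))
        (φ' + (U * (1 - A)⁻¹) *ᵥ φ) (B + U * (1 - A)⁻¹ * V) / (1 - A).det ^ β) := by
  simp only [← mmtTerm_borderedBlocks, ← weight_eliminate_borderedBlocks]
  exact hasSum_mmtTerm (N := borderedBlocks B U V A θ' φ' θ φ) (ρ := some ∘ Sum.inr) β hA none
    (some ∘ Sum.inl)

end SubmatrixMMT

lemma sum_abs_lt_one {n : ℕ} {A : Matrix (Fin n) (Fin n) ℝ}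
    (hA : ∀ i j, |A i j| < 1 / (n + 1 : ℝ)) (i : Fin n) : ∑ j, |A i j| < 1 := by
  calc ∑ j, |A i j| ≤ ∑ _j : Fin n, 1 / (n + 1 : ℝ) := Finset.sum_le_sum fun j _ ↦ (hA i j).le
    _ = n / (n + 1) := by simp [div_eq_mul_inv]
    _ < 1 := (div_lt_one (by positivity)).2 (lt_add_one _)

/-- The Submatrix Partial Permutation MacMahon Master Theorem, for small `A`,
with `(I-A)⁻¹ = Σ_{k≥0} A^k`, `B̃ = B + U(I-A)⁻¹V`, `θ̃ = θ' + θ(I-A)⁻¹V` and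
`φ̃ᵀ = φ'ᵀ + U(I-A)⁻¹φᵀ`. -/
theorem submatrix_partial_permutation_MMT (n' n : ℕ) (β : ℝ) :
    ∃ ε > (0 : ℝ), ∀ (B : Matrix (Fin n') (Fin n') ℝ) (U : Matrix (Fin n') (Fin n) ℝ)
      (V : Matrix (Fin n) (Fin n') ℝ) (A : Matrix (Fin n) (Fin n) ℝ)
      (θ' φ' : Fin n' → ℝ) (θ φ : Fin n → ℝ),
      (∀ i j, |A i j| < ε) →
      ∑' r : Fin n → ℕ, ((∏ i, (r i).factorial : ℕ) : ℝ)⁻¹ *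
          ppermB β (Sum.elim θ' fun k => θ k.1) (Sum.elim φ' fun k => φ k.1)
            (Matrix.fromBlocks B (repU U r) (repV V r) (repA A r))
        = Real.exp (θ ⬝ᵥ (∑' k : ℕ, A ^ k).mulVec φ) *
            ppermB β (θ' + Matrix.vecMul θ ((∑' k : ℕ, A ^ k) * V))
              (φ' + Matrix.mulVec (U * ∑' k : ℕ, A ^ k) φ)
              (B + U * (∑' k : ℕ, A ^ k) * V)
            / Matrix.det (1 - A) ^ β := by
  refine ⟨1 / (n + 1), by positivity, fun B U V A θ' φ' θ φ hA ↦ ?_⟩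
  rw [tsum_pow_eq_inv_one_sub (sum_abs_lt_one hA)]
  exact (submatrix_partial_permutation_MMT_general B U V A θ' φ' θ φ β (sum_abs_lt_one hA)).tsum_eq
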